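/- arXiv:2310.03369 — 2 statements merged into one kernel-verified Lean document; each statement's English description precedes it below -/
import Mathlib

section
/- (Mean value theorem for left derivatives.) Let g : [a,b] → ℝ be continuous, and suppose that at every x ∈ (a,b] the left derivative g⁻(x) = lim_{h→0⁺} (g(x) − g(x−h))/h exists. Then there exist points c, d ∈ (a,b] such that g⁻(c) ≤ (g(b) − g(a))/(b − a) ≤ g⁻(d). -/
open Filter

/-- One half: the maximum of `g x - m * x` over `[a,b]` is attained in `(a,b]`. -/
theorem mvt_left_deriv_half (a b : ℝ) (hab : a < b) (g : ℝ → ℝ) (g' : ℝ → ℝ)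
    (hcont : ContinuousOn g (Set.Icc a b))
    (hder : ∀ x ∈ Set.Ioc a b,
      Tendsto (fun h => (g x - g (x - h)) / h) (nhdsWithin 0 (Set.Ioi 0)) (nhds (g' x))) :
    ∃ d ∈ Set.Ioc a b, (g b - g a) / (b - a) ≤ g' d := by
  obtain ⟨m, hm⟩ : ∃ m, m = (g b - g a) / (b - a) := ⟨_, rfl⟩
  rw [← hm]
  have hba : 0 < b - a := sub_pos.2 hab
  have hm2 : g b - m * b = g a - m * a := by
    have : m * (b - a) = g b - g a := by rw [hm]; field_simp
    linarith
  have hc : ContinuousOn (fun x => g x - m * x) (Set.Icc a b) := by fun_prop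
  obtain ⟨d, hd, hmax⟩ : ∃ d ∈ Set.Ioc a b, ∀ y ∈ Set.Icc a b, g y - m * y ≤ g d - m * d := by
    obtain ⟨x, hx, hmax⟩ := isCompact_Icc.exists_isMaxOn (Set.nonempty_Icc.2 hab.le) hc
    have hmax : ∀ y ∈ Set.Icc a b, g y - m * y ≤ g x - m * x := fun y hy => hmax hy
    rcases eq_or_lt_of_le hx.1 with h | h
    · subst h
      exact ⟨b, ⟨hab, le_rfl⟩, fun y hy => hm2 ▸ hmax y hy⟩
    · exact ⟨x, ⟨h, hx.2⟩, hmax⟩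
  refine ⟨d, hd, ge_of_tendsto (hder d hd) ?_⟩
  have : Set.Ioo (0 : ℝ) (d - a) ∈ nhdsWithin (0 : ℝ) (Set.Ioi 0) :=
    Ioo_mem_nhdsGT (sub_pos.2 hd.1)
  filter_upwards [this] with h hh
  rw [le_div_iff₀ hh.1]
  have := hmax (d - h) ⟨by linarith [hh.2], by linarith [hh.1, hd.2]⟩
  linarith

/-- **mean value theorem for left derivatives.** Let `g : [a,b] → ℝ` be
continuous, admitting at every `x ∈ (a,b]` a left derivative
`g⁻(x) = lim_{h→0⁺} (g x - g (x - h))/h`.  Then there are `c, d ∈ (a,b]` with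
`g⁻(c) ≤ (g b - g a)/(b - a) ≤ g⁻(d)`. -/
theorem mvt_left_deriv (a b : ℝ) (hab : a < b) (g : ℝ → ℝ) (g' : ℝ → ℝ)
    (hcont : ContinuousOn g (Set.Icc a b))
    (hder : ∀ x ∈ Set.Ioc a b,
      Tendsto (fun h => (g x - g (x - h)) / h) (nhdsWithin 0 (Set.Ioi 0)) (nhds (g' x))) :
    ∃ c ∈ Set.Ioc a b, ∃ d ∈ Set.Ioc a b,
      g' c ≤ (g b - g a) / (b - a) ∧ (g b - g a) / (b - a) ≤ g' d := by
  obtain ⟨d, hd, h⟩ := mvt_left_deriv_half a b hab g g' hcont hder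
  obtain ⟨c, hc, h2⟩ := mvt_left_deriv_half a b hab (fun x => - g x) (fun x => - g' x) hcont.neg
    (fun x hx => by
      refine (hder x hx).neg.congr fun h => ?_
      ring)
  refine ⟨c, hc, d, hd, ?_, h⟩
  have : (-g b - -g a) / (b - a) = -((g b - g a) / (b - a)) := by ring
  simp only [this] at h2
  linarith
end

section
/- (Mean value theorem for right derivatives.) Let g : [a,b] → ℝ be continuous, and suppose that at every x ∈ [a,b) the right derivative g⁺(x) = lim_{h→0⁺} (g(x+h) − g(x))/h exists. Then there exist points c, d ∈ [a,b) such that g⁺(c) ≤ (g(b) − g(a))/(b − a) ≤ g⁺(d). -/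
open Filter

theorem mvt_right_aux (a b : ℝ) (hab : a < b) (g : ℝ → ℝ) (g' : ℝ → ℝ)
    (hcont : ContinuousOn g (Set.Icc a b))
    (hder : ∀ x ∈ Set.Ico a b,
      Tendsto (fun h => (g (x + h) - g x) / h) (nhdsWithin 0 (Set.Ioi 0)) (nhds (g' x)))
    (m : ℝ) (hm : ∀ x ∈ Set.Ico a b, g' x < m) : g b - g a < m * (b - a) := by
  have hd : ∀ x ∈ Set.Ico a b, HasDerivWithinAt g (g' x) (Set.Ici x) x := by
    intro x hx
    rw [← hasDerivWithinAt_Ioi_iff_Ici, hasDerivWithinAt_iff_tendsto_slope' (by simp)]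
    have h1 : Tendsto (fun z : ℝ => z - x) (nhdsWithin x (Set.Ioi x))
        (nhdsWithin 0 (Set.Ioi 0)) := by
      apply tendsto_nhdsWithin_of_tendsto_nhds_of_eventually_within
      · have : Tendsto (fun z : ℝ => z - x) (nhds x) (nhds (x - x)) :=
          (continuous_id.sub continuous_const).tendsto x
        rw [sub_self] at this
        exact this.mono_left nhdsWithin_le_nhds
      · filter_upwards [self_mem_nhdsWithin] with z hz
        exact Set.mem_Ioi.2 (sub_pos.2 (Set.mem_Ioi.1 hz))
    refine ((hder x hx).comp h1).congr ?_
    intro z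
    simp [slope_def_field]
  have ha : a ∈ Set.Ico a b := ⟨le_rfl, hab⟩
  have e1 := (hder a ha).eventually (gt_mem_nhds (hm a ha))
  have e2 : ∀ᶠ h in nhdsWithin (0 : ℝ) (Set.Ioi 0), h ∈ Set.Ioo 0 (b - a) :=
    Ioo_mem_nhdsGT (sub_pos.2 hab)
  obtain ⟨h, h1, h0, h2⟩ := (e1.and e2).exists
  rw [div_lt_iff₀ h0] at h1
  have key := image_le_of_deriv_right_le_deriv_boundary (f := g) (f' := g') (a := a + h) (b := b)
    (B := fun x => g (a + h) + m * (x - (a + h))) (B' := fun _ => m)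
    (hcont.mono (Set.Icc_subset_Icc_left (by linarith)))
    (fun x hx => hd x ⟨by linarith [hx.1], hx.2⟩) (by simp) (by fun_prop)
    (fun x _ => by
      simpa using ((((hasDerivAt_id x).sub_const (a + h)).const_mul m).const_add
        (g (a + h))).hasDerivWithinAt)
    (fun x hx => (hm x ⟨by linarith [hx.1], hx.2⟩).le)
    (x := b) ⟨by linarith, le_rfl⟩
  linarith

/-- **mean value theorem for right derivatives.** Let `g : [a,b] → ℝ` be
continuous, admitting at every `x ∈ [a,b)` a right derivative
`g⁺(x) = lim_{h→0⁺} (g (x + h) - g x)/h`.  Then there are `c, d ∈ [a,b)` with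
`g⁺(c) ≤ (g b - g a)/(b - a) ≤ g⁺(d)`. -/
theorem mvt_right_deriv (a b : ℝ) (hab : a < b) (g : ℝ → ℝ) (g' : ℝ → ℝ)
    (hcont : ContinuousOn g (Set.Icc a b))
    (hder : ∀ x ∈ Set.Ico a b,
      Tendsto (fun h => (g (x + h) - g x) / h) (nhdsWithin 0 (Set.Ioi 0)) (nhds (g' x))) :
    ∃ c ∈ Set.Ico a b, ∃ d ∈ Set.Ico a b,
      g' c ≤ (g b - g a) / (b - a) ∧ (g b - g a) / (b - a) ≤ g' d := by
  have hba : 0 < b - a := sub_pos.2 hab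
  have h1 : ∃ c ∈ Set.Ico a b, g' c ≤ (g b - g a) / (b - a) := by
    by_contra! H
    have := mvt_right_aux a b hab (fun x => - g x) (fun x => - g' x) hcont.neg
      (fun x hx => (hder x hx).neg.congr fun h => by ring) (-((g b - g a) / (b - a)))
      (fun x hx => neg_lt_neg (H x hx))
    rw [neg_mul, div_mul_cancel₀ _ hba.ne'] at this
    linarith
  have h2 : ∃ d ∈ Set.Ico a b, (g b - g a) / (b - a) ≤ g' d := by
    by_contra! H
    have := mvt_right_aux a b hab g g' hcont hder _ H
    rw [div_mul_cancel₀ _ hba.ne'] at this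
    linarith
  obtain ⟨c, hc, hc'⟩ := h1
  obtain ⟨d, hd, hd'⟩ := h2
  exact ⟨c, hc, d, hd, hc', hd'⟩
end
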